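/- Let X be a nonempty compact Hausdorff topological space and A a nontrivial unital C*-algebra over ℂ, and let C(X, A) denote the unital C*-algebra of continuous functions from X to A with pointwise operations and supremum norm. Then every state ω on C(X, A) lies in the weak*-closure of the convex hull of the set of product states { f ↦ φ(f(x)) : x ∈ X, φ a state on A }. -/

import Mathlib

/-- A state on a unital complex C*-algebra (or more generally a unital complex
star algebra): a `ℂ`-linear functional sending `1` to `1` and taking
nonnegative real values on elements of the form `star a * a`. -/
def IsState {A : Type*} [Ring A] [StarRing A] [Algebra ℂ A]
    (φ : A →ₗ[ℂ] ℂ) : Prop :=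
  φ 1 = 1 ∧ ∀ a : A, 0 ≤ (φ (star a * a)).re ∧ (φ (star a * a)).im = 0

/-!
By Hahn–Banach, it suffices to bound `re (ω f)` by `c` whenever `re (φ (f x)) ≤ c` for all points
`x` and states `φ`. A partition of unity `ρ` subordinate to a fine cover approximates `f` uniformly
by `∑ i, ρ i • f (x i)`. Each `a ↦ ω (ρ i • a)` is a positive functional on `A`, hence has real part
at most `c * ω (ρ i)` at `f (x i)`, and the weights `ω (ρ i)` add up to `ω 1 = 1`.
-/

open scoped ComplexOrder Topology Uniformity

theorem mem_closure_convexHull_of_forall_re_apply_le {𝕜 E : Type*} [RCLike 𝕜] [AddCommGroup E]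
    [Module 𝕜 E] [TopologicalSpace E] {S : Set (WeakDual 𝕜 E)} {ω : WeakDual 𝕜 E}
    (h : ∀ (f : E) (c : ℝ), (∀ η ∈ S, RCLike.re (η f) ≤ c) → RCLike.re (ω f) ≤ c) :
    ω ∈ closure (convexHull ℝ S) := by
  have : IsScalarTower ℝ 𝕜 (WeakDual 𝕜 E) :=
    ⟨fun r c η => DFunLike.ext _ _ fun f => smul_assoc r c (η f)⟩
  have : LocallyConvexSpace ℝ (WeakDual 𝕜 E) :=
    WeakBilin.locallyConvexSpace (B := topDualPairing 𝕜 E)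
  by_contra hω
  obtain ⟨l, c, hlS, hlω⟩ := RCLike.geometric_hahn_banach_closed_point (𝕜 := 𝕜)
    (convex_convexHull ℝ S).closure isClosed_closure hω
  obtain ⟨f, rfl⟩ := LinearMap.dualEmbedding_surjective (topDualPairing 𝕜 E) l
  exact hlω.not_ge <| h f c fun η hη => (hlS η <| subset_closure <| subset_convexHull ℝ S hη).le

section UniformApproximation

variable {X E : Type*} [TopologicalSpace X] [CompactSpace X] [AddCommGroup E] [Module ℝ E]
  [TopologicalSpace E] [IsTopologicalAddGroup E] [LocallyConvexSpace ℝ E]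

theorem hasBasis_nhds_forall_sub_mem_convex [ContinuousConstSMul ℝ E] (f : C(X, E)) :
    (𝓝 f).HasBasis (fun V : Set E => 0 ∈ V ∧ IsOpen V ∧ Convex ℝ V)
      fun V => {g | ∀ x, g x - f x ∈ V} := by
  let : UniformSpace E := IsTopologicalAddGroup.rightUniformSpace E
  have : IsUniformAddGroup E := isUniformAddGroup_of_addCommGroup
  have hbasis : (𝓤 E).HasBasis (fun V : Set E => 0 ∈ V ∧ IsOpen V ∧ Convex ℝ V)
      fun V => {p | p.2 - p.1 ∈ V} := by
    rw [uniformity_eq_comap_nhds_zero]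
    exact (LocallyConvexSpace.convex_open_basis_zero ℝ E).comap _
  exact nhds_basis_uniformity' hbasis.compactConvergenceUniformity_of_compact

theorem exists_finset_partition_subordinate [NormalSpace X] {U : X → Set X}
    (hUo : ∀ x, IsOpen (U x)) (hU : ∀ x, x ∈ U x) :
    ∃ (t : Finset X) (ρ : t → C(X, ℝ)), (∀ i, 0 ≤ ρ i) ∧ ∑ i, ρ i = 1 ∧
      ∀ i x, ρ i x ≠ 0 → x ∈ U i := by
  obtain ⟨t, ht⟩ := isCompact_univ.elim_finite_subcover U hUo
    fun x _ => Set.mem_iUnion.2 ⟨x, hU x⟩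
  obtain ⟨ρ, hρ⟩ := PartitionOfUnity.exists_isSubordinate (ι := t) isClosed_univ
    (fun i => U i) (fun i => hUo i) (by simpa only [Set.iUnion_subtype] using ht)
  refine ⟨t, ρ, ρ.nonneg, ?_, fun i x hx => hρ i (subset_tsupport _ hx)⟩
  ext x
  simpa only [ContinuousMap.sum_apply, ContinuousMap.one_apply, finsum_eq_sum_of_fintype] using
    ρ.sum_eq_one (Set.mem_univ x)

theorem mem_closure_sum_smul_const [NormalSpace X] [ContinuousSMul ℝ E] (f : C(X, E)) :
    f ∈ closure {g | ∃ (t : Finset X) (ρ : t → C(X, ℝ)), (∀ i, 0 ≤ ρ i) ∧ ∑ i, ρ i = 1 ∧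
      g = ∑ i, ρ i • ContinuousMap.const X (f i)} := by
  rw [mem_closure_iff_nhds_basis (hasBasis_nhds_forall_sub_mem_convex f)]
  rintro V ⟨hV0, hVo, hVc⟩
  obtain ⟨t, ρ, hρ0, hρ1, hρV⟩ := exists_finset_partition_subordinate
    (U := fun x => {y | f x - f y ∈ V})
    (fun x => hVo.preimage (continuous_const.sub f.continuous)) (fun x => by simpa using hV0)
  refine ⟨_, ⟨t, ρ, hρ0, hρ1, rfl⟩, fun x => ?_⟩
  have hsum : ∑ i, ρ i x = 1 := by rw [← ContinuousMap.sum_apply, hρ1, ContinuousMap.one_apply]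
  have hdiff : (∑ i, ρ i • ContinuousMap.const X (f i)) x - f x = ∑ i, ρ i x • (f i - f x) := by
    simp only [ContinuousMap.sum_apply, ContinuousMap.smul_apply', ContinuousMap.const_apply,
      smul_sub, Finset.sum_sub_distrib, ← Finset.sum_smul, hsum, one_smul]
  rw [hdiff, ← finsum_eq_sum_of_fintype]
  exact hVc.finsum_mem (fun i => hρ0 i x) (by rwa [finsum_eq_sum_of_fintype]) fun i => hρV i x

end UniformApproximation

section PositiveFunctionals

variable {A : Type*} [Ring A] [StarRing A] [Algebra ℂ A]

theorem isState_iff {φ : A →ₗ[ℂ] ℂ} : IsState φ ↔ φ 1 = 1 ∧ ∀ a, 0 ≤ φ (star a * a) := by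
  simp only [IsState, Complex.nonneg_iff, eq_comm]

theorem isState_inv_re_apply_one_smul {ψ : A →ₗ[ℂ] ℂ} (hψ : ∀ a, 0 ≤ ψ (star a * a))
    (h1 : 0 < ψ 1) : IsState ((ψ 1).re⁻¹ • ψ) := by
  obtain ⟨hre, him⟩ := Complex.pos_iff.1 h1
  refine isState_iff.2 ⟨?_, fun a => smul_nonneg (inv_nonneg.2 hre.le) (hψ a)⟩
  apply Complex.ext <;> simp [← him, hre.ne']

theorem IsState.add_smul_of_apply_one_eq_zero {φ ψ : A →ₗ[ℂ] ℂ} (hφ : IsState φ)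
    (hψ : ∀ a, 0 ≤ ψ (star a * a)) (h1 : ψ 1 = 0) {s : ℝ} (hs : 0 ≤ s) : IsState (φ + s • ψ) := by
  rw [isState_iff] at hφ ⊢
  exact ⟨by simp [hφ.1, h1], fun a => add_nonneg (hφ.2 a) (smul_nonneg hs (hψ a))⟩

theorem re_apply_le_mul_re_apply_one [TopologicalSpace A] {φ₀ ψ : A →L[ℂ] ℂ}
    (hφ₀ : IsState (φ₀ : A →ₗ[ℂ] ℂ)) (hψ : ∀ a, 0 ≤ ψ (star a * a)) {a : A} {c : ℝ}
    (hc : ∀ φ : A →L[ℂ] ℂ, IsState (φ : A →ₗ[ℂ] ℂ) → (φ a).re ≤ c) :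
    (ψ a).re ≤ c * (ψ 1).re := by
  have h1 : 0 ≤ ψ 1 := by simpa using hψ 1
  obtain h1 | h1 := h1.eq_or_lt
  · -- All `φ₀ + s • ψ` with `s ≥ 0` are states, so `re (ψ a)` cannot be positive.
    by_contra! hpos
    rw [← h1, Complex.zero_re, mul_zero] at hpos
    let s := (c - (φ₀ a).re + 1) / (ψ a).re
    have hs : 0 ≤ s := div_nonneg (by linarith [hc φ₀ hφ₀]) hpos.le
    have hle : (φ₀ a).re + s * (ψ a).re ≤ c := by
      simpa using hc (φ₀ + s • ψ) (hφ₀.add_smul_of_apply_one_eq_zero hψ h1.symm hs)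
    rw [div_mul_cancel₀ _ hpos.ne'] at hle
    linarith
  · have hle : (ψ 1).re⁻¹ * (ψ a).re ≤ c := by
      simpa using hc ((ψ 1).re⁻¹ • ψ) (isState_inv_re_apply_one_smul hψ h1)
    rwa [inv_mul_le_iff₀' (Complex.pos_iff.1 h1).1] at hle

end PositiveFunctionals

section ContinuousFunctions

variable {X A : Type*} [TopologicalSpace X] [Ring A] [TopologicalSpace A] [IsTopologicalRing A]
  [Algebra ℂ A] [ContinuousSMul ℝ A]

/-- The functional `a ↦ ω (r ⊗ a)` on `A` that a functional `ω` on `C(X, A) ≅ C(X) ⊗ A` and a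
real weight `r` on `X` induce; `r ⊗ a` is encoded as `r` acting on the constant map `a`. -/
noncomputable def weightedMarginal (ω : C(X, A) →L[ℂ] ℂ) (r : C(X, ℝ)) : A →L[ℂ] ℂ where
  toFun a := ω (r • ContinuousMap.const X a)
  map_add' a b := by
    rw [← map_add, ← smul_add]
    rfl
  map_smul' z a := by
    rw [RingHom.id_apply, ← map_smul]
    congr 1
    ext x
    exact smul_comm (r x) z a
  cont := ω.continuous.comp <| ContinuousMap.continuous_of_continuous_uncurry _ <|
    show Continuous fun p : A × X => r p.2 • p.1 by fun_prop

theorem weightedMarginal_apply (ω : C(X, A) →L[ℂ] ℂ) (r : C(X, ℝ)) (a : A) :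
    weightedMarginal ω r a = ω (r • ContinuousMap.const X a) :=
  rfl

theorem sum_weightedMarginal_apply_one {ι : Type*} [Fintype ι] (ω : C(X, A) →L[ℂ] ℂ)
    {ρ : ι → C(X, ℝ)} (hρ : ∑ i, ρ i = 1) : ∑ i, weightedMarginal ω (ρ i) 1 = ω 1 := by
  simp only [weightedMarginal_apply, ← map_sum, ← Finset.sum_smul, hρ, one_smul,
    ContinuousMap.const_one]

variable [StarRing A] [ContinuousStar A] [StarModule ℂ A]

theorem weightedMarginal_star_mul_self_nonneg {ω : C(X, A) →L[ℂ] ℂ}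
    (hω : ∀ f, 0 ≤ ω (star f * f)) {r : C(X, ℝ)} (hr : 0 ≤ r) (a : A) :
    0 ≤ weightedMarginal ω r (star a * a) := by
  let s : C(X, ℝ) := ⟨fun x => √(r x), by fun_prop⟩
  have hsquare : r • ContinuousMap.const X (star a * a) =
      star (s • ContinuousMap.const X a) * (s • ContinuousMap.const X a) := by
    ext x
    have hrx : 0 ≤ r x := hr x
    simp [s, smul_smul, Real.mul_self_sqrt hrx]
  rw [weightedMarginal_apply, hsquare]
  exact hω _

theorem IsState.weightedMarginal_one {ω : C(X, A) →L[ℂ] ℂ}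
    (hω : IsState (ω : C(X, A) →ₗ[ℂ] ℂ)) : IsState (weightedMarginal ω 1 : A →ₗ[ℂ] ℂ) := by
  rw [isState_iff] at hω ⊢
  refine ⟨?_, weightedMarginal_star_mul_self_nonneg hω.2 zero_le_one⟩
  simpa [weightedMarginal_apply] using hω.1

variable (X A) in
/-- The product states `f ↦ φ (f x)` on `C(X, A) ≅ C(X) ⊗ A`: a point evaluation on the first
factor and a state `φ` on the second. Only the product functional is required to be continuous. -/
def productStates : Set (WeakDual ℂ C(X, A)) :=
  {ω' | ∃ (x : X) (φ : A →ₗ[ℂ] ℂ), IsState φ ∧ ∀ f : C(X, A), ω' f = φ (f x)}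

theorem IsState.re_apply_le_of_forall_productStates [CompactSpace X] [NormalSpace X]
    [LocallyConvexSpace ℝ A] {ω : C(X, A) →L[ℂ] ℂ} (hω : IsState (ω : C(X, A) →ₗ[ℂ] ℂ))
    {f : C(X, A)} {c : ℝ} (hc : ∀ η ∈ productStates X A, (η f).re ≤ c) : (ω f).re ≤ c := by
  obtain ⟨hω1, hωpos⟩ := isState_iff.1 hω
  have hstate (x : X) (φ : A →L[ℂ] ℂ) (hφ : IsState (φ : A →ₗ[ℂ] ℂ)) : (φ (f x)).re ≤ c :=
    hc (StrongDual.toWeakDual (φ ∘L ContinuousMap.evalCLM ℂ x)) ⟨x, φ, hφ, fun _ => rfl⟩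
  have hclosed : IsClosed {g : C(X, A) | (ω g).re ≤ c} :=
    isClosed_le (Complex.continuous_re.comp ω.continuous) continuous_const
  refine closure_minimal ?_ hclosed (mem_closure_sum_smul_const f)
  rintro _ ⟨t, ρ, hρ0, hρ1, rfl⟩
  calc (ω (∑ i, ρ i • ContinuousMap.const X (f i))).re
      = ∑ i, (weightedMarginal ω (ρ i) (f i)).re := by
        simp only [map_sum, Complex.re_sum, weightedMarginal_apply]
    _ ≤ ∑ i, c * (weightedMarginal ω (ρ i) 1).re :=
        Finset.sum_le_sum fun i _ => re_apply_le_mul_re_apply_one hω.weightedMarginal_one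
          (weightedMarginal_star_mul_self_nonneg hωpos (hρ0 i)) (hstate i)
    _ = c * (ω 1).re := by
        rw [← Finset.mul_sum, ← Complex.re_sum, sum_weightedMarginal_apply_one ω hρ1]
    _ = c := by simp [show ω 1 = 1 from hω1]

theorem state_of_continuousMap_decomposable_into_product_states_general [CompactSpace X]
    [NormalSpace X] [LocallyConvexSpace ℝ A] (ω : WeakDual ℂ C(X, A))
    (hω : IsState (WeakDual.toStrongDual ω : C(X, A) →ₗ[ℂ] ℂ)) :
    ω ∈ closure (convexHull ℝ (productStates X A)) :=
  mem_closure_convexHull_of_forall_re_apply_le fun _ _ => hω.re_apply_le_of_forall_productStates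

end ContinuousFunctions

/-- On the separated composite system `C(X, A) ≅ C(X) ⊗ A` (first factor
commutative), every state is decomposable into product states: it lies in the
weak*-closure of the convex hull of the product states `f ↦ φ (f x)`. -/
theorem state_of_continuousMap_decomposable_into_product_states
    (X : Type*) [TopologicalSpace X] [CompactSpace X] [T2Space X] [Nonempty X]
    (A : Type*) [CStarAlgebra A] [Nontrivial A]
    (ω : WeakDual ℂ C(X, A))
    (hω : ω 1 = 1 ∧ ∀ f : C(X, A), 0 ≤ (ω (star f * f)).re ∧ (ω (star f * f)).im = 0) :
    ω ∈ closure (convexHull ℝ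
      {ω' : WeakDual ℂ C(X, A) | ∃ (x : X) (φ : A →ₗ[ℂ] ℂ),
        IsState φ ∧ ∀ f : C(X, A), ω' f = φ (f x)}) :=
  state_of_continuousMap_decomposable_into_product_states_general ω hω
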